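/- Let R be a (not necessarily local) Gorenstein ring of finite Krull dimension d, and C a finitely generated d-semidualizing R-module. Then C is a projective R-module of rank 1. -/

import Mathlib

open CategoryTheory

/-- A commutative noetherian ring is Gorenstein (of finite Krull dimension) if it has finite
injective dimension as a module over itself, characterized by the eventual vanishing of
`Ext^i_R(M, R)` for all modules `M` and all sufficiently large `i`. -/
def IsGorensteinRing (R : Type) [CommRing R] : Prop :=
  IsNoetherianRing R ∧ ∃ d : ℕ, ∀ (M : ModuleCat R) (i : ℕ), d < i →
    Subsingleton (((Ext R (ModuleCat R) i).obj (Opposite.op M)).obj (ModuleCat.of R R))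

/-- A finitely generated module `C` over a commutative ring `R` is `m`-semidualizing if the
natural homothety map `R → Hom_R(C,C)` is an isomorphism and `Ext^i_R(C,C) = 0` for
all `0 < i ≤ m`. -/
def IsSemidualizing (R : Type) [CommRing R] (C : Type) [AddCommGroup C] [Module R C]
    (m : ℕ) : Prop :=
  Module.Finite R C ∧ Function.Bijective (LinearMap.lsmul R C) ∧
    ∀ i : ℕ, 0 < i → i ≤ m →
      Subsingleton (((Ext R (ModuleCat R) i).obj
        (Opposite.op (ModuleCat.of R C))).obj (ModuleCat.of R C))

/-!
The claim is local, and finite injective dimension, the homothety isomorphism and the vanishing of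
`Ext` all pass to localizations, so let `R` be local with residue field `k`. Dividing `R` and `C`
by an `R`-regular element `x` of the maximal ideal lowers the dimension, the injective dimension and
the range of vanishing `Ext` by one; the injective dimension drops because the `x`-torsion of an
injective coresolution of `R` is an injective coresolution over `R ⧸ (x)`, shifted by one. By
Nakayama, and since a cyclic module with `Hom(C, C) = R` is free, it suffices that `C` is cyclic in
the case where no regular element is left.

Then `k` embeds into `R`. If `Ext^(i+2)(-, R)` vanishes on finitely generated modules, this
embedding gives `Ext^(i+1)(k, R) = 0`, hence `Ext^(i+1)(-, R) = 0` on finitely generated modules;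
descending from the injective dimension, `Ext^1(-, R) = 0`. So a nonzero map `φ : k → R` extends
along the embedding `1 ↦ φ 1 • c` of `k` into `C` to a functional `ψ : C → R`. It takes a unit
value at `c`, hence is surjective, and `Hom(C, C) = R` then makes `C` cyclic.
-/

open scoped Pointwise

universe u

section Ext

/-- `Ext^i_R(M, N) = 0`, for the `Ext` groups of the abelian category of `R`-modules. -/
abbrev ExtVanishes (R : Type u) [CommRing R] (M N : Type u) [AddCommGroup M] [Module R M]
    [AddCommGroup N] [Module R N] (i : ℕ) : Prop :=
  Subsingleton (Abelian.Ext (ModuleCat.of R M) (ModuleCat.of R N) i)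

variable {R : Type u} [CommRing R] {M₁ M₂ M₃ N : Type u} [AddCommGroup M₁] [Module R M₁]
  [AddCommGroup M₂] [Module R M₂] [AddCommGroup M₃] [Module R M₃] [AddCommGroup N] [Module R N]

lemma shortExact_shortComplexOfCompEqZero {f : M₁ →ₗ[R] M₂} {g : M₂ →ₗ[R] M₃}
    (hf : Function.Injective f) (hfg : Function.Exact f g) (hg : Function.Surjective g) :
    (ModuleCat.shortComplexOfCompEqZero f g hfg.linearMap_comp_eq_zero).ShortExact :=
  ModuleCat.shortComplex_shortExact _ hfg hf hg

namespace ExtVanishes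

lemma of_projective [Module.Projective R M₁] (i : ℕ) : ExtVanishes R M₁ N (i + 1) :=
  Abelian.Ext.subsingleton_of_projective _ _ _

lemma of_linearEquiv (e : M₁ ≃ₗ[R] M₂) {i : ℕ} (h : ExtVanishes R M₁ N i) :
    ExtVanishes R M₂ N i :=
  have : Subsingleton (((Abelian.extFunctor i).obj (.op (ModuleCat.of R M₁))).obj
    (ModuleCat.of R N)) := h
  (((Abelian.extFunctor i).mapIso e.toModuleIso.op).app
    (ModuleCat.of R N)).addCommGroupIsoToAddEquiv.injective.subsingleton

variable {f : M₁ →ₗ[R] M₂} {g : M₂ →ₗ[R] M₃} {i : ℕ}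

lemma of_exact_middle (hf : Function.Injective f) (hfg : Function.Exact f g)
    (hg : Function.Surjective g) (h₁ : ExtVanishes R M₁ N i) (h₃ : ExtVanishes R M₃ N i) :
    ExtVanishes R M₂ N i := by
  refine subsingleton_of_forall_eq 0 fun e => ?_
  obtain ⟨e', rfl⟩ := Abelian.Ext.contravariant_sequence_exact₂
    (shortExact_shortComplexOfCompEqZero hf hfg hg) (ModuleCat.of R N) e (h₁.elim _ _)
  rw [h₃.elim e' 0, Abelian.Ext.comp_zero]

lemma of_exact_left (hf : Function.Injective f) (hfg : Function.Exact f g)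
    (hg : Function.Surjective g) (h₂ : ExtVanishes R M₂ N i) (h₃ : ExtVanishes R M₃ N (i + 1)) :
    ExtVanishes R M₁ N i := by
  refine subsingleton_of_forall_eq 0 fun e => ?_
  obtain ⟨e', rfl⟩ := Abelian.Ext.contravariant_sequence_exact₁
    (shortExact_shortComplexOfCompEqZero hf hfg hg) (ModuleCat.of R N) e (add_comm 1 i)
    (h₃.elim _ _)
  rw [h₂.elim e' 0, Abelian.Ext.comp_zero]

lemma of_exact_right (hf : Function.Injective f) (hfg : Function.Exact f g)
    (hg : Function.Surjective g) (h₁ : ExtVanishes R M₁ N i) (h₂ : ExtVanishes R M₂ N (i + 1)) :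
    ExtVanishes R M₃ N (i + 1) := by
  refine subsingleton_of_forall_eq 0 fun e => ?_
  obtain ⟨e', rfl⟩ := Abelian.Ext.contravariant_sequence_exact₃
    (shortExact_shortComplexOfCompEqZero hf hfg hg) (ModuleCat.of R N) e (h₂.elim _ _)
    (add_comm 1 i)
  rw [h₁.elim e' 0, Abelian.Ext.comp_zero]

lemma of_exact_covariant_right (hf : Function.Injective f) (hfg : Function.Exact f g)
    (hg : Function.Surjective g) (h₂ : ExtVanishes R N M₂ i) (h₁ : ExtVanishes R N M₁ (i + 1)) :
    ExtVanishes R N M₃ i := by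
  refine subsingleton_of_forall_eq 0 fun e => ?_
  obtain ⟨e', rfl⟩ := Abelian.Ext.covariant_sequence_exact₃ (ModuleCat.of R N)
    (shortExact_shortComplexOfCompEqZero hf hfg hg) e rfl (h₁.elim _ _)
  rw [h₂.elim e' 0, Abelian.Ext.zero_comp]

lemma exists_extension (hf : Function.Injective f) (hfg : Function.Exact f g)
    (hg : Function.Surjective g) (h : ExtVanishes R M₃ N 1) (φ : M₁ →ₗ[R] N) :
    ∃ ψ : M₂ →ₗ[R] N, ψ ∘ₗ f = φ := by
  obtain ⟨e, he⟩ := Abelian.Ext.contravariant_sequence_exact₁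
    (shortExact_shortComplexOfCompEqZero hf hfg hg) (ModuleCat.of R N)
    (Abelian.Ext.mk₀ (ModuleCat.ofHom φ)) (add_comm 1 0) (h.elim _ _)
  obtain ⟨ψ, rfl⟩ := (Abelian.Ext.mk₀_bijective _ _).2 e
  rw [Abelian.Ext.mk₀_comp_mk₀] at he
  exact ⟨ψ.hom, congrArg ModuleCat.Hom.hom ((Abelian.Ext.mk₀_bijective _ _).1 he)⟩

lemma exists_lift (hf : Function.Injective f) (hfg : Function.Exact f g)
    (hg : Function.Surjective g) (h : ExtVanishes R N M₁ 1) (φ : N →ₗ[R] M₃) :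
    ∃ ψ : N →ₗ[R] M₂, g ∘ₗ ψ = φ := by
  obtain ⟨e, he⟩ := Abelian.Ext.covariant_sequence_exact₃ (ModuleCat.of R N)
    (shortExact_shortComplexOfCompEqZero hf hfg hg)
    (Abelian.Ext.mk₀ (ModuleCat.ofHom φ)) rfl (h.elim _ _)
  obtain ⟨ψ, rfl⟩ := (Abelian.Ext.mk₀_bijective _ _).2 e
  rw [Abelian.Ext.mk₀_comp_mk₀] at he
  exact ⟨ψ.hom, congrArg ModuleCat.Hom.hom ((Abelian.Ext.mk₀_bijective _ _).1 he)⟩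

lemma one_of_forall_exists_extension (hf : Function.Injective f) (hfg : Function.Exact f g)
    (hg : Function.Surjective g) (h₂ : ExtVanishes R M₂ N 1)
    (h : ∀ φ : M₁ →ₗ[R] N, ∃ ψ : M₂ →ₗ[R] N, ψ ∘ₗ f = φ) : ExtVanishes R M₃ N 1 := by
  refine subsingleton_of_forall_eq 0 fun e => ?_
  obtain ⟨e', rfl⟩ := Abelian.Ext.contravariant_sequence_exact₃
    (shortExact_shortComplexOfCompEqZero hf hfg hg) (ModuleCat.of R N) e (h₂.elim _ _)
    (add_comm 1 0)
  obtain ⟨φ, rfl⟩ := (Abelian.Ext.mk₀_bijective _ _).2 e'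
  obtain ⟨ψ, hψ⟩ := h φ.hom
  obtain rfl : ModuleCat.ofHom f ≫ ModuleCat.ofHom ψ = φ := ModuleCat.hom_ext hψ
  rw [← Abelian.Ext.mk₀_comp_mk₀]
  exact (shortExact_shortComplexOfCompEqZero hf hfg hg).extClass_comp_assoc _ (h := rfl)

end ExtVanishes

lemma extVanishes_of_forall_prime [IsNoetherianRing R] {i : ℕ}
    (h : ∀ p : Ideal R, p.IsPrime → ExtVanishes R (R ⧸ p) N (i + 1))
    (M : Type u) [AddCommGroup M] [Module R M] [Module.Finite R M] :
    ExtVanishes R M N (i + 1) := by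
  refine IsNoetherianRing.induction_on_isQuotientEquivQuotientPrime R ‹_›
    (motive := fun M _ _ _ => ExtVanishes R M N (i + 1)) ?_ ?_ ?_
  · exact fun _ _ _ _ _ => .of_projective i
  · exact fun _ _ _ _ p e => (h p.1 p.2).of_linearEquiv e.symm
  · exact fun _ _ _ _ _ _ _ _ _ _ _ _ _ _ hf hg hfg h₁ h₃ => .of_exact_middle hf hfg hg h₁ h₃

end Ext

section InjectiveDimension

variable {R : Type u} [CommRing R]

lemma lsmul_surjective_of_injective {I : Type u} [AddCommGroup I] [Module R I]
    [Module.Injective R I] {x : R} (hx : IsSMulRegular R x) :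
    Function.Surjective (LinearMap.lsmul R I x) := by
  intro y
  obtain ⟨h, hh⟩ := Module.Injective.out (LinearMap.lsmul R R x) hx
    (LinearMap.toSpanSingleton R I y)
  exact ⟨h 1, by simpa [← map_smul] using hh 1⟩

lemma lsmul_quotient_surjective {x : R} (hx : IsSMulRegular R x) {I : Type u} [AddCommGroup I]
    [Module R I] [Module.Injective R I] (N : Submodule R I) :
    Function.Surjective (LinearMap.lsmul R (I ⧸ N) x) := by
  intro q
  obtain ⟨y, rfl⟩ := N.mkQ_surjective q
  obtain ⟨z, rfl⟩ := lsmul_surjective_of_injective hx y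
  exact ⟨N.mkQ z, rfl⟩

lemma injective_torsionBy (I : Type u) [AddCommGroup I] [Module R I] [Module.Injective R I]
    (x : R) : Module.Injective (R ⧸ Ideal.span {x}) (Submodule.torsionBy R I x) := by
  refine Module.Baer.injective fun J g => ?_
  obtain ⟨h, hh⟩ := Module.Injective.extension_property R I J (R ⧸ Ideal.span {x})
    (J.subtype.restrictScalars R) J.subtype_injective
    ((Submodule.torsionBy R I x).subtype ∘ₗ g.restrictScalars R)
  have hx (a : R ⧸ Ideal.span {x}) : h a ∈ Submodule.torsionBy R I x := by
    rw [Submodule.mem_torsionBy_iff, ← map_smul, ← algebraMap_smul (R ⧸ Ideal.span {x}) x a]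
    simp [Ideal.Quotient.eq_zero_iff_mem.2 (Ideal.mem_span_singleton_self x)]
  exact ⟨(h.codRestrict _ hx).extendScalarsOfSurjective Ideal.Quotient.mk_surjective,
    fun a ha => Subtype.ext (LinearMap.congr_fun hh ⟨a, ha⟩)⟩

variable (R) in
lemma exists_injective_linearMap_to_injective (N : Type u) [AddCommGroup N] [Module R N] :
    ∃ (I : Type u) (_ : AddCommGroup I) (_ : Module R I) (f : N →ₗ[R] I),
      Module.Injective R I ∧ Function.Injective f := by
  obtain ⟨I, _, f, _⟩ := EnoughInjectives.presentation (ModuleCat.of R N)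
  exact ⟨I, inferInstance, inferInstance, f.hom, Module.injective_module_of_injective_object R I,
    (ModuleCat.mono_iff_injective f).1 inferInstance⟩

lemma hasInjectiveDimensionLE_zero_iff (M : Type u) [AddCommGroup M] [Module R M] :
    HasInjectiveDimensionLE (ModuleCat.of R M) 0 ↔ Module.Injective R M :=
  injective_iff_hasInjectiveDimensionLT_one.symm.trans
    (Module.injective_iff_injective_object R M).symm

/-- The restriction of a linear map to the `x`-torsion submodules, as a map of modules over
`R ⧸ (x)`. -/
def torsionByMap {M N : Type*} [AddCommGroup M] [Module R M] [AddCommGroup N] [Module R N] (x : R)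
    (f : M →ₗ[R] N) :
    Submodule.torsionBy R M x →ₗ[R ⧸ Ideal.span {x}] Submodule.torsionBy R N x :=
  LinearMap.extendScalarsOfSurjective Ideal.Quotient.mk_surjective <|
    f.restrict fun m hm => by
      rw [Submodule.mem_torsionBy_iff] at hm ⊢
      rw [← map_smul, hm, map_zero]

section TorsionByMap

variable {M₁ M₂ M₃ : Type*} [AddCommGroup M₁] [Module R M₁]
  [AddCommGroup M₂] [Module R M₂] [AddCommGroup M₃] [Module R M₃] {x : R}
  {f : M₁ →ₗ[R] M₂} {g : M₂ →ₗ[R] M₃}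

lemma torsionByMap_injective (hf : Function.Injective f) : Function.Injective (torsionByMap x f) :=
  fun _ _ h => Subtype.ext (hf (congrArg Subtype.val h))

lemma torsionByMap_exact (hf : Function.Injective f) (hfg : Function.Exact f g) :
    Function.Exact (torsionByMap x f) (torsionByMap x g) := by
  rintro ⟨y, hy⟩
  constructor
  · intro h
    obtain ⟨z, rfl⟩ := (hfg y).1 (congrArg Subtype.val h)
    exact ⟨⟨z, hf ((map_smul f x z).trans (hy.trans (map_zero f).symm))⟩, rfl⟩
  · rintro ⟨z, hz⟩
    exact Subtype.ext ((hfg y).2 ⟨z, congrArg Subtype.val hz⟩)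

lemma torsionByMap_surjective (hfg : Function.Exact f g) (hg : Function.Surjective g)
    (hx : Function.Surjective (LinearMap.lsmul R M₁ x)) :
    Function.Surjective (torsionByMap x g) := by
  rintro ⟨z, hz⟩
  obtain ⟨y, rfl⟩ := hg z
  obtain ⟨w, hw⟩ := (hfg (x • y)).1 (by rw [map_smul]; exact hz)
  obtain ⟨v, rfl⟩ := hx w
  refine ⟨⟨y - f v, ?_⟩, Subtype.ext ?_⟩
  · rw [Submodule.mem_torsionBy_iff, smul_sub, ← hw, LinearMap.lsmul_apply, map_smul, sub_self]
  · exact (map_sub g y (f v)).trans (by rw [hfg.apply_apply_eq_zero, sub_zero])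

end TorsionByMap

lemma hasInjectiveDimensionLE_torsionBy {x : R} (hx : IsSMulRegular R x) (n : ℕ) (N : Type u)
    [AddCommGroup N] [Module R N] (hN : Function.Surjective (LinearMap.lsmul R N x))
    (h : HasInjectiveDimensionLE (ModuleCat.of R N) n) :
    HasInjectiveDimensionLE
      (ModuleCat.of (R ⧸ Ideal.span {x}) (Submodule.torsionBy R N x)) n := by
  induction n generalizing N with
  | zero =>
    rw [hasInjectiveDimensionLE_zero_iff] at h ⊢
    exact @injective_torsionBy R _ N _ _ h x
  | succ n ih =>
    obtain ⟨I, _, _, f, _, hf⟩ := exists_injective_linearMap_to_injective R N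
    have hI := Module.injective_object_of_injective_module R I
    have := injective_torsionBy I x
    have hIx := Module.injective_object_of_injective_module (R ⧸ Ideal.span {x})
      (Submodule.torsionBy R I x)
    have hS := shortExact_shortComplexOfCompEqZero hf f.exact_map_mkQ_range
      (Submodule.mkQ_surjective _)
    have hSx := shortExact_shortComplexOfCompEqZero (torsionByMap_injective (x := x) hf)
      (torsionByMap_exact hf f.exact_map_mkQ_range)
      (torsionByMap_surjective f.exact_map_mkQ_range (Submodule.mkQ_surjective _) hN)
    exact (hSx.hasInjectiveDimensionLT_X₃_iff n hIx).1
      (ih _ (lsmul_quotient_surjective hx _) ((hS.hasInjectiveDimensionLT_X₃_iff n hI).2 h))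

lemma exact_subtype_torsionBy_lsmul (M : Type*) [AddCommGroup M] [Module R M] (x : R) :
    Function.Exact (Submodule.torsionBy R M x).subtype (LinearMap.lsmul R M x) :=
  LinearMap.exact_subtype_ker_map _

lemma exists_torsionBy_quotSMulTop_exact {x : R} {M₁ M₂ M₃ : Type*}
    [AddCommGroup M₁] [Module R M₁] [AddCommGroup M₂] [Module R M₂] [AddCommGroup M₃]
    [Module R M₃] {f : M₁ →ₗ[R] M₂} {g : M₂ →ₗ[R] M₃}
    (hf : Function.Injective f) (hfg : Function.Exact f g) (hg : Function.Surjective g)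
    (hx : Function.Surjective (LinearMap.lsmul R M₂ x)) :
    ∃ δ : Submodule.torsionBy R M₃ x →ₗ[R ⧸ Ideal.span {x}] QuotSMulTop x M₁,
      Function.Exact (torsionByMap x g) δ ∧ Function.Surjective δ := by
  have h₁ : f ∘ₗ LinearMap.lsmul R M₁ x = LinearMap.lsmul R M₂ x ∘ₗ f := by ext; simp
  have h₂ : g ∘ₗ LinearMap.lsmul R M₂ x = LinearMap.lsmul R M₃ x ∘ₗ g := by ext; simp
  have hC := LinearMap.exact_lsmul_mkQ_smul_top M₁ x
  have hK := exact_subtype_torsionBy_lsmul M₃ x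
  refine ⟨(SnakeLemma.δ' _ _ _ f g hfg f g hfg h₁ h₂ _ hK _ hC hg hf).extendScalarsOfSurjective
    Ideal.Quotient.mk_surjective, ?_, ?_⟩
  · exact SnakeLemma.exact_δ'_right _ _ _ f g hfg f g hfg h₁ h₂ _
      (exact_subtype_torsionBy_lsmul M₂ x) _ hK _ hC hg hf
      ((torsionByMap x g).restrictScalars R) rfl Subtype.val_injective
  · rw [← LinearMap.exact_zero_iff_surjective PUnit]
    exact SnakeLemma.exact_δ'_left _ _ _ f g hfg f g hfg h₁ h₂ _ hK _ hC (0 : M₂ →ₗ[R] PUnit)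
      ((LinearMap.exact_zero_iff_surjective _ _).2 hx) hg hf 0 rfl (Submodule.mkQ_surjective _)

lemma hasInjectiveDimensionLE_quotSMulTop {x : R} (hx : IsSMulRegular R x) (n : ℕ) (N : Type u)
    [AddCommGroup N] [Module R N] (hN : IsSMulRegular N x)
    (h : HasInjectiveDimensionLE (ModuleCat.of R N) (n + 1)) :
    HasInjectiveDimensionLE (ModuleCat.of (R ⧸ Ideal.span {x}) (QuotSMulTop x N)) n := by
  obtain ⟨I, _, _, f, _, hf⟩ := exists_injective_linearMap_to_injective R N
  have hfg := f.exact_map_mkQ_range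
  have hg := (LinearMap.range f).mkQ_surjective
  have hI := Module.injective_object_of_injective_module R I
  have := injective_torsionBy I x
  have hIx := Module.injective_object_of_injective_module (R ⧸ Ideal.span {x})
    (Submodule.torsionBy R I x)
  obtain ⟨δ, hδ, hδ_surj⟩ := exists_torsionBy_quotSMulTop_exact hf hfg hg
    (lsmul_surjective_of_injective hx)
  have hinj : Function.Injective (torsionByMap x (LinearMap.range f).mkQ) := by
    refine (injective_iff_map_eq_zero _).2 fun y hy => ?_
    obtain ⟨z, rfl⟩ := (torsionByMap_exact hf hfg y).1 hy
    rw [show z = 0 from Subtype.ext (hN.right_eq_zero_of_smul z.2), map_zero]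
  have hQ := ((shortExact_shortComplexOfCompEqZero hf hfg hg).hasInjectiveDimensionLT_X₃_iff
    n hI).2 h
  exact (shortExact_shortComplexOfCompEqZero hinj hδ hδ_surj).hasInjectiveDimensionLT_X₃ (n + 1)
    (hasInjectiveDimensionLE_torsionBy hx n _ (lsmul_quotient_surjective hx _) hQ)
    inferInstance

lemma hasInjectiveDimensionLE_quotient_span_singleton {x : R} (hx : IsSMulRegular R x) (n : ℕ)
    (h : HasInjectiveDimensionLE (ModuleCat.of R R) (n + 1)) :
    HasInjectiveDimensionLE (ModuleCat.of (R ⧸ Ideal.span {x}) (R ⧸ Ideal.span {x})) n := by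
  let e : (R ⧸ x • (⊤ : Ideal R)) ≃ₗ[R] R ⧸ Ideal.span {x} :=
    Submodule.quotEquivOfEq _ _ (by rw [← Submodule.ideal_span_singleton_smul]; simp)
  exact (ModuleCat.hasInjectiveDimensionLE_iff_of_linearEquiv
    (e.extendScalarsOfSurjective Ideal.Quotient.mk_surjective) n).1
    (hasInjectiveDimensionLE_quotSMulTop hx n R hx h)

end InjectiveDimension

section Localization

variable {R : Type u} [CommRing R] [IsNoetherianRing R] (S : Submonoid R)
  {N N' : Type u} [AddCommGroup N] [Module R N] [AddCommGroup N'] [Module R N']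
  (g : N →ₗ[R] N') [IsLocalizedModule S g]

include S g in
lemma ExtVanishes.one_of_isLocalizedModule {M : Type u} [AddCommGroup M] [Module R M]
    [Module.Finite R M] (h : ExtVanishes R M N 1) : ExtVanishes R M N' 1 := by
  obtain ⟨n, p, hp⟩ := Module.Finite.exists_fin' R M
  have hker := LinearMap.exact_subtype_ker_map p
  refine .one_of_forall_exists_extension Subtype.val_injective hker hp (.of_projective 0)
    fun φ => ?_
  have := Module.finitePresentation_of_finite R (LinearMap.ker p)
  obtain ⟨φ', s, hφ'⟩ := Module.FinitePresentation.exists_lift_of_isLocalizedModule S g φ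
  obtain ⟨ψ, rfl⟩ := h.exists_extension Subtype.val_injective hker hp φ'
  obtain ⟨u, hu⟩ := IsLocalizedModule.map_units g s
  refine ⟨u⁻¹.1 ∘ₗ g ∘ₗ ψ, ?_⟩
  rw [LinearMap.comp_assoc, LinearMap.comp_assoc, hφ']
  have hsu : s • φ = u.1 ∘ₗ φ := by rw [hu]; rfl
  rw [hsu, ← LinearMap.comp_assoc, ← Module.End.mul_eq_comp, Units.inv_mul]
  rfl

include S g in
lemma ExtVanishes.of_isLocalizedModule {i : ℕ} (M : Type u) [AddCommGroup M] [Module R M]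
    [Module.Finite R M] (h : ExtVanishes R M N (i + 1)) : ExtVanishes R M N' (i + 1) := by
  induction i generalizing M with
  | zero => exact h.one_of_isLocalizedModule S g
  | succ i ih =>
    obtain ⟨n, p, hp⟩ := Module.Finite.exists_fin' R M
    have hker := LinearMap.exact_subtype_ker_map p
    exact .of_exact_right Subtype.val_injective hker hp
      (ih _ (.of_exact_left Subtype.val_injective hker hp (.of_projective i) h))
      (.of_projective _)

end Localization

section Homothety

variable {R C : Type*} [CommRing R] [AddCommGroup C] [Module R C]

lemma exists_span_singleton_eq_top_of_surjective
    (hC : Function.Surjective (LinearMap.lsmul R C)) {ψ : C →ₗ[R] R}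
    (hψ : Function.Surjective ψ) : ∃ c : C, Submodule.span R {c} = ⊤ := by
  obtain ⟨c, hc⟩ := hψ 1
  obtain ⟨r, hr⟩ := hC (LinearMap.toSpanSingleton R C c ∘ₗ ψ)
  have hsmul (y : C) : r • y = ψ y • c := LinearMap.congr_fun hr y
  have hr_one : r = 1 := by simpa [hc] using congrArg ψ (hsmul c)
  refine ⟨c, Submodule.eq_top_iff'.2 fun y => Submodule.mem_span_singleton.2 ⟨ψ y, ?_⟩⟩
  rw [← hsmul, hr_one, one_smul]

lemma nonempty_linearEquiv_of_span_singleton_eq_top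
    (hC : Function.Injective (LinearMap.lsmul R C)) {c : C} (hc : Submodule.span R {c} = ⊤) :
    Nonempty (C ≃ₗ[R] R) := by
  refine ⟨(LinearEquiv.ofBijective (LinearMap.toSpanSingleton R C c) ⟨?_, ?_⟩).symm⟩
  · refine (injective_iff_map_eq_zero _).2 fun r hr => hC ?_
    ext y
    obtain ⟨s, rfl⟩ := Submodule.mem_span_singleton.1 (hc.ge (Submodule.mem_top (x := y)))
    simpa [smul_comm r s c] using congrArg (s • ·) hr
  · rwa [← LinearMap.range_eq_top, LinearMap.range_toSpanSingleton]

lemma isSMulRegular_of_lsmul_bijective [IsNoetherianRing R] [Module.Finite R C]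
    (hC : Function.Bijective (LinearMap.lsmul R C)) {x : R} (hx : IsSMulRegular R x) :
    IsSMulRegular C x := by
  have : Subsingleton (C →ₗ[R] LinearMap.ker (LinearMap.lsmul R C x)) := by
    refine subsingleton_of_forall_eq 0 fun φ => ?_
    obtain ⟨r, hr⟩ := hC.2 ((LinearMap.ker (LinearMap.lsmul R C x)).subtype ∘ₗ φ)
    have hφ (c : C) : r • c = φ c := LinearMap.congr_fun hr c
    obtain rfl : r = 0 := hx.right_eq_zero_of_smul <| hC.1 <| by
      ext c
      simpa [mul_smul, hφ] using show x • (φ c : C) = 0 from (φ c).2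
    ext c
    simpa using (hφ c).symm
  obtain ⟨r, hr, hreg⟩ := IsSMulRegular.subsingleton_linearMap_iff.1 this
  obtain rfl : r = 0 := hC.1 <| by
    ext c
    simpa using Module.mem_annihilator.1 hr c
  have := (IsSMulRegular.zero_iff_subsingleton).1 hreg
  exact LinearMap.ker_eq_bot.1 (Submodule.subsingleton_iff_eq_bot.1 this)

end Homothety

section LocalExt

open IsLocalRing

lemma injective_of_ne_zero_of_residueField {R M : Type*} [CommRing R] [IsLocalRing R]
    [AddCommGroup M] [Module R M] {f : (R ⧸ maximalIdeal R) →ₗ[R] M} (hf : f ≠ 0) :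
    Function.Injective f :=
  have : IsSimpleModule R (R ⧸ maximalIdeal R) :=
    isSimpleModule_iff_isCoatom.2 (maximalIdeal.isMaximal R).out
  LinearMap.injective_of_ne_zero hf

variable {R : Type u} [CommRing R] [IsLocalRing R] [IsNoetherianRing R]
  {N : Type u} [AddCommGroup N] [Module R N] [Module.Finite R N] {i : ℕ}

lemma extVanishes_of_quotSMulTop (M : Type u) [AddCommGroup M] [Module R M]
    [Module.Finite R M] {x : R} (hx : x ∈ maximalIdeal R) (hM : IsSMulRegular M x)
    (h : ExtVanishes R (QuotSMulTop x M) N (i + 1)) : ExtVanishes R M N i := by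
  have hsurj (e : Abelian.Ext (ModuleCat.of R M) (ModuleCat.of R N) i) : ∃ e', x • e' = e := by
    obtain ⟨e', rfl⟩ := Abelian.Ext.contravariant_sequence_exact₁
      (shortExact_shortComplexOfCompEqZero (f := LinearMap.lsmul R M x) hM
        (LinearMap.exact_lsmul_mkQ_smul_top M x)
        (Submodule.mkQ_surjective _)) (ModuleCat.of R N) e (add_comm 1 i) (h.elim _ _)
    refine ⟨e', ?_⟩
    have hx_id : ModuleCat.ofHom (LinearMap.lsmul R M x) = x • 𝟙 (ModuleCat.of R M) := rfl
    change _ = (Abelian.Ext.mk₀ (ModuleCat.ofHom (LinearMap.lsmul R M x))).comp e' _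
    rw [hx_id, Abelian.Ext.mk₀_smul, Abelian.Ext.smul_comp, Abelian.Ext.mk₀_id_comp]
  have htop : (⊤ : Submodule R (Abelian.Ext (ModuleCat.of R M) (ModuleCat.of R N) i)) = ⊥ := by
    refine Submodule.eq_bot_of_le_smul_of_le_jacobson_bot (maximalIdeal R) _
      Module.Finite.fg_top (fun e _ => ?_) (jacobson_eq_maximalIdeal _ bot_ne_top).ge
    obtain ⟨e', rfl⟩ := hsurj e
    exact Submodule.smul_mem_smul hx trivial
  exact (Submodule.subsingleton_iff R).1 (subsingleton_of_bot_eq_top htop.symm)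

lemma extVanishes_of_residueField (hk : ExtVanishes R (R ⧸ maximalIdeal R) N (i + 1))
    (h : ∀ (M : Type u) [AddCommGroup M] [Module R M] [Module.Finite R M],
      ExtVanishes R M N (i + 2))
    (M : Type u) [AddCommGroup M] [Module R M] [Module.Finite R M] :
    ExtVanishes R M N (i + 1) := by
  refine extVanishes_of_forall_prime (fun p hp => ?_) M
  by_cases hpm : p = maximalIdeal R
  · rwa [hpm]
  obtain ⟨x, hx, hxp⟩ : ∃ x ∈ maximalIdeal R, x ∉ p :=
    Set.not_subset.1 fun hle => hpm ((le_maximalIdeal hp.ne_top).antisymm hle)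
  have hreg : IsSMulRegular (R ⧸ p) x := by
    refine IsSMulRegular.of_right_eq_zero_of_smul fun a ha => ?_
    rw [Algebra.smul_def, mul_eq_zero] at ha
    exact ha.resolve_left (mt Ideal.Quotient.eq_zero_iff_mem.1 hxp)
  exact extVanishes_of_quotSMulTop _ hx hreg (h _)

lemma extVanishes_one_of_nontrivial_linearMap_residueField
    [Nontrivial ((R ⧸ maximalIdeal R) →ₗ[R] R)] (n : ℕ)
    (hR : HasInjectiveDimensionLE (ModuleCat.of R R) n)
    (M : Type u) [AddCommGroup M] [Module R M] [Module.Finite R M] :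
    ExtVanishes R M R 1 := by
  obtain ⟨φ, hφ⟩ := exists_ne (0 : (R ⧸ maximalIdeal R) →ₗ[R] R)
  suffices h : ∀ k i (M : Type u) [AddCommGroup M] [Module R M] [Module.Finite R M],
      n ≤ i + k → ExtVanishes R M R (i + 1) from h n 0 M (by lia)
  intro k
  induction k with
  | zero =>
    intro i M _ _ _ hi
    exact HasInjectiveDimensionLT.subsingleton _ (n + 1) _ (by lia) _
  | succ k ih =>
    intro i M _ _ _ hi
    refine extVanishes_of_residueField ?_ (fun M _ _ _ => ih (i + 1) M (by lia)) M
    exact .of_exact_left (injective_of_ne_zero_of_residueField hφ) φ.exact_map_mkQ_range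
      (Submodule.mkQ_surjective _) (.of_projective i) (ih (i + 1) _ (by lia))

end LocalExt

section DepthZero

open IsLocalRing

variable {R : Type u} [CommRing R] [IsLocalRing R] [IsNoetherianRing R]

lemma exists_span_singleton_eq_top_of_nontrivial_linearMap_residueField
    [Nontrivial ((R ⧸ maximalIdeal R) →ₗ[R] R)] (n : ℕ)
    (hR : HasInjectiveDimensionLE (ModuleCat.of R R) n)
    {C : Type u} [AddCommGroup C] [Module R C] [Module.Finite R C]
    (hC : Function.Bijective (LinearMap.lsmul R C)) : ∃ c : C, Submodule.span R {c} = ⊤ := by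
  obtain ⟨φ, hφ⟩ := exists_ne (0 : (R ⧸ maximalIdeal R) →ₗ[R] R)
  have hφ_one : φ 1 ≠ 0 := by
    contrapose! hφ
    ext
    simpa using hφ
  obtain ⟨c, hc⟩ : ∃ c : C, φ 1 • c ≠ 0 := by
    contrapose! hφ_one
    exact hC.1 (by ext c; simpa using hφ_one c)
  let f := LinearMap.toSpanSingleton R C c ∘ₗ φ
  have hf : Function.Injective f :=
    injective_of_ne_zero_of_residueField fun h => hc (LinearMap.congr_fun h 1)
  obtain ⟨ψ, hψ⟩ := ExtVanishes.exists_extension hf f.exact_map_mkQ_range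
    (Submodule.mkQ_surjective _)
    (extVanishes_one_of_nontrivial_linearMap_residueField n hR _) φ
  have hψ_one : φ 1 * ψ c = φ 1 := by simpa [f] using LinearMap.congr_fun hψ 1
  have hψ_unit : IsUnit (ψ c) :=
    (isUnit_or_isUnit_one_sub_self (ψ c)).resolve_right fun h =>
      hφ_one (h.mul_left_eq_zero.1 (by rw [mul_sub, mul_one, hψ_one, sub_self]))
  refine exists_span_singleton_eq_top_of_surjective hC.2 (ψ := ψ) ?_
  exact LinearMap.range_eq_top.1 (Ideal.eq_top_of_isUnit_mem _ ⟨c, rfl⟩ hψ_unit)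

lemma exists_isSMulRegular_mem_maximalIdeal [Subsingleton ((R ⧸ maximalIdeal R) →ₗ[R] R)] :
    ∃ x ∈ maximalIdeal R, IsSMulRegular R x := by
  simpa [Ideal.annihilator_quotient] using
    (IsSMulRegular.subsingleton_linearMap_iff (R := R) (M := R)
      (N := R ⧸ maximalIdeal R)).1 inferInstance

lemma nontrivial_linearMap_residueField_of_ringKrullDim_le_zero (h : ringKrullDim R ≤ 0) :
    Nontrivial ((R ⧸ maximalIdeal R) →ₗ[R] R) := by
  by_contra h_triv
  have := not_nontrivial_iff_subsingleton.1 h_triv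
  obtain ⟨x, hxm, hx⟩ := exists_isSMulRegular_mem_maximalIdeal (R := R)
  have := Ring.krullDimLE_iff.2 h
  obtain ⟨k, hk⟩ := Ring.KrullDimLE.isNilpotent_iff_mem_maximalIdeal.2 hxm
  exact IsSMulRegular.not_zero (hk ▸ hx.pow k)

end DepthZero

/-- Let `C` be an `R`-module, `A` an `R`-algebra and `D` an `A`-module. An `R`-linear map
`q : C → D` is *semidualizing* up to degree `n` if its image generates `D` over `A`, the homothety
map `A → Hom_R(C, D)` is bijective and `Ext^i_R(C, D) = 0` for `0 < i ≤ n`.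

For `q = id` this says that `C` is `n`-semidualizing. Changing `A` and `D` but not the source `C`
keeps all `Ext` groups over the fixed ring `R`. -/
structure IsSemidualizingMap {R : Type u} [CommRing R] (A : Type u) [CommRing A] [Algebra R A]
    {C D : Type u} [AddCommGroup C] [Module R C] [AddCommGroup D] [Module R D] [Module A D]
    [IsScalarTower R A D] (q : C →ₗ[R] D) (n : ℕ) : Prop where
  span_range : Submodule.span A (Set.range q) = ⊤
  smul_bijective : Function.Bijective fun a : A => a • q
  extVanishes : ∀ i < n, ExtVanishes R C D (i + 1)

namespace IsSemidualizingMap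

variable {R A C D : Type u} [CommRing R] [CommRing A] [Algebra R A]
  [AddCommGroup C] [Module R C] [AddCommGroup D] [Module R D] [Module A D] [IsScalarTower R A D]

lemma lsmul_bijective {q : C →ₗ[R] D} {n : ℕ} (hq : IsSemidualizingMap A q n) :
    Function.Bijective (LinearMap.lsmul A D) := by
  refine ⟨fun a b hab => hq.smul_bijective.1 ?_, fun φ => ?_⟩
  · ext c
    exact LinearMap.congr_fun hab (q c)
  · obtain ⟨a, ha⟩ := hq.smul_bijective.2 (φ.restrictScalars R ∘ₗ q)
    exact ⟨a, LinearMap.ext_on_range hq.span_range fun c => LinearMap.congr_fun ha c⟩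

lemma mem_span_singleton_of_forall_smul_mem {q : C →ₗ[R] D} {n : ℕ}
    (hq : IsSemidualizingMap A q n) {x : A} (hx : IsSMulRegular D x) {a : A}
    (ha : ∀ c, a • q c ∈ LinearMap.range (LinearMap.lsmul A D x)) : a ∈ Ideal.span {x} := by
  let ψ := LinearMap.codRestrictOfInjective (a • q)
    ((LinearMap.lsmul A D x).restrictScalars R) hx ha
  obtain ⟨b, hb⟩ := hq.smul_bijective.2 ψ
  refine Ideal.mem_span_singleton'.2 ⟨b, hq.smul_bijective.1 ?_⟩
  ext c
  have hψ : x • ψ c = a • q c :=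
    LinearMap.codRestrictOfInjective_comp_apply _ ((LinearMap.lsmul A D x).restrictScalars R) _ _ c
  have hbc : b • q c = ψ c := LinearMap.congr_fun hb c
  change (b * x) • q c = a • q c
  rw [mul_comm, mul_smul, hbc, hψ]

lemma quotient {q : C →ₗ[R] D} {n : ℕ} (hq : IsSemidualizingMap A q (n + 1)) {x : A}
    (hx : IsSMulRegular D x) {E : Type u} [AddCommGroup E] [Module R E] [Module A E]
    [Module (A ⧸ Ideal.span {x}) E] [IsScalarTower R A E]
    [IsScalarTower A (A ⧸ Ideal.span {x}) E] [IsScalarTower R (A ⧸ Ideal.span {x}) E]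
    {π : D →ₗ[A] E} (hπ : Function.Surjective π)
    (hxπ : Function.Exact (LinearMap.lsmul A D x) π) :
    IsSemidualizingMap (A ⧸ Ideal.span {x}) (π.restrictScalars R ∘ₗ q) n := by
  have hf : Function.Injective ((LinearMap.lsmul A D x).restrictScalars R) := hx
  have hfπ : Function.Exact ((LinearMap.lsmul A D x).restrictScalars R) (π.restrictScalars R) :=
    hxπ
  have hmk (a : A) : Ideal.Quotient.mk (Ideal.span {x}) a • (π.restrictScalars R ∘ₗ q) =
      π.restrictScalars R ∘ₗ (a • q) := by
    ext c
    exact (algebraMap_smul (A ⧸ Ideal.span {x}) a (π (q c))).trans (map_smul π a (q c)).symm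
  refine ⟨?_, ⟨?_, fun φ => ?_⟩, fun i hi => ?_⟩
  · apply Submodule.restrictScalars_injective A
    rw [Submodule.restrictScalars_span A _ Ideal.Quotient.mk_surjective, LinearMap.coe_comp,
      LinearMap.coe_restrictScalars, Set.range_comp, ← Submodule.map_span, hq.span_range,
      Submodule.map_top, LinearMap.range_eq_top.2 hπ, Submodule.restrictScalars_top]
  · intro a b hab
    obtain ⟨a, rfl⟩ := Ideal.Quotient.mk_surjective a
    obtain ⟨b, rfl⟩ := Ideal.Quotient.mk_surjective b
    refine Ideal.Quotient.eq.2 (hq.mem_span_singleton_of_forall_smul_mem hx fun c => ?_)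
    have hc : π (a • q c) = π (b • q c) :=
      LinearMap.congr_fun (((hmk a).symm.trans hab).trans (hmk b)) c
    rw [sub_smul]
    exact (hxπ _).1 (by rw [map_sub, hc, sub_self])
  · obtain ⟨ψ, rfl⟩ := ExtVanishes.exists_lift hf hfπ hπ (hq.extVanishes 0 n.succ_pos) φ
    obtain ⟨a, rfl⟩ := hq.smul_bijective.2 ψ
    exact ⟨Ideal.Quotient.mk _ a, hmk a⟩
  · exact .of_exact_covariant_right hf hfπ hπ (hq.extVanishes i (by lia))
      (hq.extVanishes (i + 1) (by lia))

lemma of_isLocalizedModule [IsNoetherianRing R] [Module.Finite R C] (S : Submonoid R)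
    [IsLocalization S A] (g : C →ₗ[R] D) [IsLocalizedModule S g] {n : ℕ}
    (hC : Function.Bijective (LinearMap.lsmul R C)) (hExt : ∀ i < n, ExtVanishes R C C (i + 1)) :
    IsSemidualizingMap A g n where
  span_range := by
    simpa using span_eq_top_of_isLocalizedModule A S g (v := Set.univ) Submodule.span_univ
  smul_bijective := by
    have hg (r : R) : algebraMap R A r • g = g ∘ₗ LinearMap.lsmul R C r := by ext; simp
    refine ⟨fun a b hab => ?_, fun φ => ?_⟩
    · obtain ⟨r, r', s, ha, hb⟩ := IsLocalization.surj₂ S A a b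
      have hrr' : g ∘ₗ LinearMap.lsmul R C r = g ∘ₗ LinearMap.lsmul R C r' := by
        rw [← hg, ← hg, ← ha, ← hb, mul_comm a, mul_comm b, mul_smul, mul_smul]
        exact congrArg _ hab
      obtain ⟨t, ht⟩ := Module.Finite.exists_smul_of_comp_eq_of_isLocalizedModule S g _ _ hrr'
      have htr : (t : R) * r = t * r' := hC.1 (by
        rw [← smul_eq_mul, ← smul_eq_mul, map_smul, map_smul]; exact ht)
      have hr_eq : algebraMap R A r = algebraMap R A r' :=
        (IsLocalization.eq_iff_exists S A).2 ⟨t, htr⟩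
      exact (IsLocalization.map_units A s).mul_right_cancel (ha.trans (hr_eq.trans hb.symm))
    · have := Module.finitePresentation_of_finite R C
      obtain ⟨φ', s, hφ'⟩ := Module.FinitePresentation.exists_lift_of_isLocalizedModule S g φ
      obtain ⟨r, rfl⟩ := hC.2 φ'
      refine ⟨IsLocalization.mk' A r s, (IsLocalization.map_units A s).smul_left_cancel.1 ?_⟩
      change _ • _ • g = _
      rw [← mul_smul, IsLocalization.mk'_spec', hg, hφ']
      exact (algebraMap_smul A (s : R) φ).symm
  extVanishes i hi := ExtVanishes.of_isLocalizedModule S g C (hExt i hi)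

end IsSemidualizingMap

section Cyclic

open IsLocalRing

lemma span_singleton_eq_top_of_quotSMulTop {A D : Type*} [CommRing A] [IsLocalRing A]
    [AddCommGroup D] [Module A D] [Module.Finite A D] {x : A} (hx : x ∈ maximalIdeal A) {c : D}
    (hc : Submodule.span (A ⧸ Ideal.span {x}) {(x • (⊤ : Submodule A D)).mkQ c} = ⊤) :
    Submodule.span A {c} = ⊤ := by
  have hxc : (x • (⊤ : Submodule A D)) ⊔ Submodule.span A {c} = ⊤ := by
    rw [← Submodule.map_mkQ_eq_top, Submodule.map_span, Set.image_singleton,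
      ← Submodule.restrictScalars_span A (A ⧸ Ideal.span {x}) Ideal.Quotient.mk_surjective, hc,
      Submodule.restrictScalars_top]
  refine top_le_iff.1 (Submodule.le_of_le_smul_of_le_jacobson_bot (I := Ideal.span {x})
    Module.Finite.fg_top ?_ ?_)
  · rwa [jacobson_eq_maximalIdeal _ bot_ne_top, Ideal.span_singleton_le_iff_mem]
  · rw [Submodule.ideal_span_singleton_smul, sup_comm, hxc]

theorem IsSemidualizingMap.exists_span_singleton_eq_top {R C : Type u} [CommRing R]
    [AddCommGroup C] [Module R C] {d n : ℕ} {A D : Type u} [CommRing A] [IsNoetherianRing A]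
    [IsLocalRing A] [Algebra R A] [AddCommGroup D] [Module R D] [Module A D]
    [IsScalarTower R A D] [Module.Finite A D] {q : C →ₗ[R] D} (hq : IsSemidualizingMap A q d)
    (hdim : ringKrullDim A ≤ d) (hA : HasInjectiveDimensionLE (ModuleCat.of A A) n) :
    ∃ c : D, Submodule.span A {c} = ⊤ := by
  induction d generalizing A D with
  | zero =>
    have := nontrivial_linearMap_residueField_of_ringKrullDim_le_zero hdim
    exact exists_span_singleton_eq_top_of_nontrivial_linearMap_residueField n hA
      hq.lsmul_bijective
  | succ d ih =>
    obtain _ | _ := subsingleton_or_nontrivial ((A ⧸ maximalIdeal A) →ₗ[A] A)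
    · obtain ⟨x, hxm, hx⟩ := exists_isSMulRegular_mem_maximalIdeal (R := A)
      have hxD := isSMulRegular_of_lsmul_bijective hq.lsmul_bijective hx
      have : Nontrivial (A ⧸ Ideal.span {x}) := Ideal.Quotient.nontrivial_iff.2 <| by
        rwa [Ne, Ideal.span_singleton_eq_top]
      have := IsLocalRing.of_surjective' (Ideal.Quotient.mk (Ideal.span {x}))
        Ideal.Quotient.mk_surjective
      have := Module.Finite.of_restrictScalars_finite A (A ⧸ Ideal.span {x}) (QuotSMulTop x D)
      have hdim' : ringKrullDim (A ⧸ Ideal.span {x}) ≤ d := by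
        have := ringKrullDim_quotient_succ_le_of_nonZeroDivisor (R := A) (r := x)
          (mem_nonZeroDivisors_iff_left.2 fun a ha => hx.right_eq_zero_of_smul ha)
        exact ENat.WithBot.add_le_add_one_right_iff.1 (this.trans hdim)
      obtain ⟨y, hy⟩ := ih (hq.quotient (E := QuotSMulTop x D) hxD (Submodule.mkQ_surjective _)
          (LinearMap.exact_lsmul_mkQ_smul_top D x)) hdim'
        (hasInjectiveDimensionLE_quotient_span_singleton hx n
          (hasInjectiveDimensionLT_of_ge _ (n + 1) (n + 2) (by lia)))
      obtain ⟨c, rfl⟩ := Submodule.mkQ_surjective _ y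
      exact ⟨c, span_singleton_eq_top_of_quotSMulTop hxm hy⟩
    · exact exists_span_singleton_eq_top_of_nontrivial_linearMap_residueField n hA
        hq.lsmul_bijective

end Cyclic

lemma hasInjectiveDimensionLE_localization {R : Type u} [CommRing R] [IsNoetherianRing R]
    (S : Submonoid R) (n : ℕ) (h : HasInjectiveDimensionLE (ModuleCat.of R R) n) :
    HasInjectiveDimensionLE (ModuleCat.of (Localization S) (Localization S)) n := by
  have hS := ModuleCat.localizedModule_hasInjectiveDimensionLE n S (ModuleCat.of R R)
  have := ModuleCat.localizedModule_isLocalizedModule (ModuleCat.of R R) S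
  let e := IsLocalizedModule.linearEquiv S
    ((ModuleCat.of R R).localizedModuleMkLinearMap S) (Algebra.linearMap R (Localization S))
  exact (ModuleCat.hasInjectiveDimensionLE_iff_of_linearEquiv
    (N := ModuleCat.of (Localization S) (Localization S))
    (e.extendScalarsOfIsLocalization S (Localization S)) n).1 hS

lemma subsingleton_abelianExt_of_subsingleton_ext {R : Type u} [CommRing R]
    (M N : ModuleCat.{u} R) (i : ℕ)
    (h : Subsingleton (((Ext R (ModuleCat R) (i + 1)).obj (.op M)).obj N)) :
    Subsingleton (Abelian.Ext M N (i + 1)) := by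
  obtain ⟨P⟩ := HasProjectiveResolution.out (Z := M)
  have hP := (ModuleCat.isZero_of_subsingleton
    (((Ext R (ModuleCat R) (i + 1)).obj (.op M)).obj N)).of_iso (P.isoExt (R := R) (i + 1) N).symm
  rw [← HomologicalComplex.exactAt_iff_isZero_homology,
    HomologicalComplex.exactAt_iff' _ i (i + 1) (i + 2) (by simp) (by simp),
    ShortComplex.moduleCat_exact_iff] at hP
  refine subsingleton_of_forall_eq 0 fun e => ?_
  obtain ⟨f, hf, rfl⟩ := P.extMk_surjective e (i + 2) rfl
  exact (P.extMk_eq_zero_iff _ _ _ _ i rfl).2 (hP f hf)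

lemma IsGorensteinRing.exists_hasInjectiveDimensionLE {R : Type} [CommRing R]
    (hR : IsGorensteinRing R) : ∃ n, HasInjectiveDimensionLE (ModuleCat.of R R) n := by
  obtain ⟨-, n, hn⟩ := hR
  refine ⟨n, .mk fun i hi M e => ?_⟩
  obtain ⟨j, rfl⟩ := Nat.exists_eq_add_of_lt hi
  exact (subsingleton_abelianExt_of_subsingleton_ext M _ _ (hn M _ hi)).elim _ _

lemma IsSemidualizing.extVanishes {R C : Type} [CommRing R] [AddCommGroup C] [Module R C]
    {m : ℕ} (hC : IsSemidualizing R C m) {i : ℕ} (hi : i < m) : ExtVanishes R C C (i + 1) :=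
  subsingleton_abelianExt_of_subsingleton_ext _ _ i (hC.2.2 (i + 1) i.succ_pos hi)

theorem nonempty_localizedModule_linearEquiv_localization {R C : Type u} [CommRing R]
    [IsNoetherianRing R] [AddCommGroup C] [Module R C] [Module.Finite R C] {d n : ℕ}
    (hdim : ringKrullDim R ≤ d) (hR : HasInjectiveDimensionLE (ModuleCat.of R R) n)
    (hC : Function.Bijective (LinearMap.lsmul R C)) (hExt : ∀ i < d, ExtVanishes R C C (i + 1))
    (p : Ideal R) [p.IsPrime] :
    Nonempty (LocalizedModule p.primeCompl C ≃ₗ[Localization p.primeCompl]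
      Localization p.primeCompl) := by
  have := IsLocalization.isNoetherianRing p.primeCompl (Localization p.primeCompl) ‹_›
  have : IsLocalRing (Localization p.primeCompl) :=
    inferInstanceAs (IsLocalRing (Localization.AtPrime p))
  have hdim_p : ringKrullDim (Localization p.primeCompl) ≤ d :=
    (IsLocalization.AtPrime.ringKrullDim_eq_height p (Localization.AtPrime p)).le.trans
      ((Ideal.height_le_ringKrullDim_of_ne_top Ideal.IsPrime.ne_top').trans hdim)
  have hq : IsSemidualizingMap (Localization p.primeCompl)
      (LocalizedModule.mkLinearMap p.primeCompl C) d :=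
    .of_isLocalizedModule p.primeCompl _ hC hExt
  obtain ⟨c, hc⟩ := hq.exists_span_singleton_eq_top hdim_p
    (hasInjectiveDimensionLE_localization p.primeCompl n hR)
  exact nonempty_linearEquiv_of_span_singleton_eq_top hq.lsmul_bijective.1 hc

theorem d_semidualizing_projective_rank_one_of_gorenstein_general
    {R C : Type u} [CommRing R] [IsNoetherianRing R]
    [AddCommGroup C] [Module R C] [Module.Finite R C] {d n : ℕ}
    (hdim : ringKrullDim R ≤ d) (hR : HasInjectiveDimensionLE (ModuleCat.of R R) n)
    (hC : Function.Bijective (LinearMap.lsmul R C)) (hExt : ∀ i < d, ExtVanishes R C C (i + 1)) :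
    Module.Projective R C ∧
      ∀ (m : Ideal R) [m.IsMaximal],
        Nonempty (LocalizedModule m.primeCompl C ≃ₗ[Localization m.primeCompl]
          Localization m.primeCompl) := by
  have hrank (m : Ideal R) [m.IsMaximal] :=
    nonempty_localizedModule_linearEquiv_localization hdim hR hC hExt m
  have := Module.finitePresentation_of_finite R C
  refine ⟨Module.projective_of_localization_maximal fun m _ => ?_, hrank⟩
  obtain ⟨e⟩ := hrank m
  exact .of_equiv e.symm

theorem d_semidualizing_projective_rank_one_of_gorenstein
    (R : Type) [CommRing R] [IsNoetherianRing R]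
    (d : ℕ) (hdim : ringKrullDim R = d)
    (hGor : IsGorensteinRing R)
    (C : Type) [AddCommGroup C] [Module R C] [Module.Finite R C]
    (hC : IsSemidualizing R C d) :
    Module.Projective R C ∧
      ∀ (m : Ideal R) [m.IsMaximal],
        Nonempty (LocalizedModule m.primeCompl C ≃ₗ[Localization m.primeCompl]
          Localization m.primeCompl) := by
  obtain ⟨n, hR⟩ := hGor.exists_hasInjectiveDimensionLE
  exact d_semidualizing_projective_rank_one_of_gorenstein_general hdim.le hR hC.2.1
    fun i hi => hC.extVanishes hi
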